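/- arXiv:cs/0612064 — 2 statements merged into one kernel-verified Lean document; each statement's English description precedes it below -/
import Mathlib

section
/- (Main theorem, lower bound.) If K_max is nonempty and R = max{P_τ : τ ∈ K_max}, then for every message length L the key appearance equivocation satisfies log(2) · R^L ≤ H(K | M^L C^L). -/
open scoped Classical

noncomputable section

/-- Probability of a word under the i.i.d. extension of the symbol distribution `P`. -/
def wordP {M : Type*} (P : M → ℝ) {L : ℕ} (m : Fin L → M) : ℝ := ∏ l, P (m l)

/-- Number of keys in `K` mapping the message `m` (letterwise) to the cryptogram `c`. -/
def keyCount {M : Type*} (K : Subgroup (Equiv.Perm M)) {L : ℕ} (m c : Fin L → M) : ℕ :=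
  Nat.card {k : Equiv.Perm M // k ∈ K ∧ ∀ l, k (m l) = c l}

/-- The key appearance equivocation `H(K | M^L C^L)` for the substitution cipher with
key space `K` (keys uniform), symbol distribution `P` and message length `L`. -/
def kae {M : Type*} [Fintype M] (K : Subgroup (Equiv.Perm M)) (P : M → ℝ) (L : ℕ) : ℝ :=
  ∑ m : Fin L → M, ∑ c : Fin L → M,
    wordP P m * (keyCount K m c : ℝ) / (Nat.card K : ℝ) * Real.log (keyCount K m c)

/-- The fixed set `F(π)` of a permutation. -/
def fixedSet {M : Type*} [Fintype M] [DecidableEq M] (π : Equiv.Perm M) : Finset M :=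
  Finset.univ.filter fun j => π j = j

/-- `P_π`: total probability of the fixed set of `π`. -/
def Pfix {M : Type*} [Fintype M] [DecidableEq M] (P : M → ℝ) (π : Equiv.Perm M) : ℝ :=
  ∑ j ∈ fixedSet π, P j

/-- A key is maximal if it is a non-identity element of `K` whose fixed set is maximal
under inclusion among fixed sets of non-identity elements of `K`. -/
def IsMaximalKey {M : Type*} [Fintype M] [DecidableEq M] (K : Subgroup (Equiv.Perm M))
    (π : Equiv.Perm M) : Prop :=
  π ∈ K ∧ π ≠ 1 ∧ ∀ τ ∈ K, τ ≠ 1 → fixedSet π ⊆ fixedSet τ → fixedSet τ = fixedSet π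

/-- The stabilizer of the message `m` in `K` is nontrivial. -/
def hasNontrivialStab {M : Type*} (K : Subgroup (Equiv.Perm M)) {L : ℕ} (m : Fin L → M) : Prop :=
  ∃ k ∈ K, k ≠ 1 ∧ ∀ l, k (m l) = m l

/-- Total probability of length-`L` messages with a nontrivial stabilizer in `K`. -/
def probNontrivial {M : Type*} [Fintype M] (K : Subgroup (Equiv.Perm M)) (P : M → ℝ)
    (L : ℕ) : ℝ :=
  ∑ m : Fin L → M, if hasNontrivialStab K m then wordP P m else 0

theorem kae_aux_sum {M : Type*} [Fintype M] (K : Subgroup (Equiv.Perm M)) {L : ℕ}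
    (m : Fin L → M) : ∑ c : Fin L → M, keyCount K m c = Nat.card K := by
  have e : K ≃ (Σ c : Fin L → M, {k : Equiv.Perm M // k ∈ K ∧ ∀ l, k (m l) = c l}) :=
    { toFun := fun k => ⟨fun l => k.1 (m l), k.1, k.2, fun _ => rfl⟩
      invFun := fun x => ⟨x.2.1, x.2.2.1⟩
      left_inv := fun _ => rfl
      right_inv := by
        rintro ⟨c, k, hk, h⟩
        obtain rfl : (fun l => k (m l)) = c := funext h
        rfl }
  rw [Nat.card_congr e, Nat.card_sigma]
  rfl

theorem kae_aux_two {M : Type*} [Fintype M] (K : Subgroup (Equiv.Perm M)) {L : ℕ}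
    (m c : Fin L → M) (τ : Equiv.Perm M) (hτ : τ ∈ K) (h1 : τ ≠ 1)
    (hf : ∀ l, τ (m l) = m l) (h0 : keyCount K m c ≠ 0) : 2 ≤ keyCount K m c := by
  unfold keyCount at *
  obtain ⟨⟨k, hk, hc⟩⟩ := (Nat.card_ne_zero.1 h0).1
  have : Nontrivial {k : Equiv.Perm M // k ∈ K ∧ ∀ l, k (m l) = c l} := by
    refine ⟨⟨k, hk, hc⟩, ⟨k * τ, K.mul_mem hk hτ, fun l => ?_⟩, ?_⟩
    · rw [Equiv.Perm.mul_apply, hf, hc]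
    · intro h
      have h2 : k = k * τ := congrArg Subtype.val h
      exact h1 (left_eq_mul.1 h2)
  exact Finite.one_lt_card

/-- Main theorem, lower bound: `log 2 · R^L ≤ H(K | M^L C^L)`. -/
theorem kae_lower_bound {M : Type*} [Fintype M] [DecidableEq M]
    (K : Subgroup (Equiv.Perm M)) (P : M → ℝ)
    (hP : ∀ x, 0 ≤ P x) (hsum : ∑ x, P x = 1) (L : ℕ) (R : ℝ)
    (hmax : ∀ τ, IsMaximalKey K τ → Pfix P τ ≤ R)
    (hex : ∃ τ, IsMaximalKey K τ ∧ Pfix P τ = R) :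
    Real.log 2 * R ^ L ≤ kae K P L := by
  obtain ⟨τ, ⟨hτ, h1, -⟩, rfl⟩ := hex
  have hw : ∀ m : Fin L → M, 0 ≤ wordP P m := fun m => Finset.prod_nonneg fun l _ => hP _
  have hK : (Nat.card K : ℝ) ≠ 0 := by exact_mod_cast Nat.card_pos.ne'
  have hR : Pfix P τ ^ L = ∑ m ∈ Fintype.piFinset (fun _ : Fin L => fixedSet τ), wordP P m := by
    have := Finset.prod_univ_sum (fun _ : Fin L => fixedSet τ) (fun _ => P)
    simp only [Finset.prod_const, Finset.card_univ, Fintype.card_fin] at this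
    unfold Pfix wordP
    convert this
  have hnn : ∀ m c : Fin L → M, 0 ≤ wordP P m * (keyCount K m c : ℝ) / (Nat.card K : ℝ) :=
    fun m c => div_nonneg (mul_nonneg (hw m) (Nat.cast_nonneg _)) (Nat.cast_nonneg _)
  rw [hR, Finset.mul_sum]
  unfold kae
  calc _ ≤ ∑ m ∈ Fintype.piFinset (fun _ : Fin L => fixedSet τ), ∑ c : Fin L → M,
        wordP P m * (keyCount K m c : ℝ) / (Nat.card K : ℝ) * Real.log (keyCount K m c) := by
        refine Finset.sum_le_sum fun m hm => ?_
        have hf : ∀ l, τ (m l) = m l := fun l => by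
          have := Fintype.mem_piFinset.1 hm l
          simpa [fixedSet] using this
        have hs : (∑ c : Fin L → M, (keyCount K m c : ℝ)) = (Nat.card K : ℝ) := by
          exact_mod_cast kae_aux_sum K m
        calc Real.log 2 * wordP P m = ∑ c : Fin L → M,
              wordP P m * (keyCount K m c : ℝ) / (Nat.card K : ℝ) * Real.log 2 := by
              rw [← Finset.sum_mul, ← Finset.sum_div, ← Finset.mul_sum, hs,
                mul_div_cancel_right₀ _ hK, mul_comm]
          _ ≤ _ := by
              refine Finset.sum_le_sum fun c _ => ?_
              by_cases h0 : keyCount K m c = 0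
              · simp [h0]
              · refine mul_le_mul_of_nonneg_left ?_ (hnn m c)
                refine Real.log_le_log (by norm_num) ?_
                exact_mod_cast kae_aux_two K m c τ hτ h1 hf h0
    _ ≤ _ := by
        refine Finset.sum_le_sum_of_subset_of_nonneg (Finset.subset_univ _) fun m _ _ => ?_
        exact Finset.sum_nonneg fun c _ => mul_nonneg (hnn m c) (Real.log_natCast_nonneg _)
end
end

section
/- (Simple substitution cipher.) Let M be a finite alphabet with |M| = N ≥ 2, probability distribution P_M, and key space K = Sym(M). Set R₁ = 1 − min_{i ≠ j}(P_M(i) + P_M(j)). Then for every message length L: log(2) · R₁^L ≤ H(K | M^L C^L) ≤ log(N!) · (N(N−1)/2) · R₁^L. -/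
open scoped Classical

noncomputable section

/-- Indicator that both `i` and `j` are missing from `m`. -/
def missP {M : Type*} {L : ℕ} (m : Fin L → M) (p : M × M) : Prop :=
  ∀ l, m l ≠ p.1 ∧ m l ≠ p.2

theorem sum_miss {M : Type*} [Fintype M] (P : M → ℝ) (hsum : ∑ x, P x = 1)
    (p : M × M) (hp : p.1 ≠ p.2) (L : ℕ) :
    ∑ m : Fin L → M, (if missP m p then wordP P m else 0) = (1 - (P p.1 + P p.2)) ^ L := by
  have h1 : ∑ x, (if x ≠ p.1 ∧ x ≠ p.2 then P x else 0) = 1 - (P p.1 + P p.2) := by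
    have : ∀ x, (if x ≠ p.1 ∧ x ≠ p.2 then P x else 0)
        = P x - ((if x = p.1 then P x else 0) + (if x = p.2 then P x else 0)) := by
      intro x
      by_cases h : x = p.1
      · subst h; simp [hp]
      · by_cases h' : x = p.2 <;> simp [h, h']
        intro h2
        exact absurd h2.symm hp
    simp_rw [this]
    rw [Finset.sum_sub_distrib, Finset.sum_add_distrib, hsum]
    simp
  rw [← h1, Fintype.sum_pow]
  refine Finset.sum_congr rfl fun m _ => ?_
  by_cases h : missP m p
  · rw [if_pos h, wordP]
    exact Finset.prod_congr rfl fun l _ => (if_pos (h l)).symm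
  · rw [if_neg h]
    unfold missP at h
    rw [not_forall] at h
    obtain ⟨l, hl⟩ := h
    exact (Finset.prod_eq_zero (Finset.mem_univ l) (if_neg hl)).symm

theorem wordP_nonneg {M : Type*} (P : M → ℝ) (hP : ∀ x, 0 ≤ P x) {L : ℕ} (m : Fin L → M) :
    0 ≤ wordP P m := Finset.prod_nonneg fun _ _ => hP _

theorem sum_keyCount {M : Type*} [Fintype M] {L : ℕ} (m : Fin L → M) :
    ∑ c : Fin L → M, (keyCount (⊤ : Subgroup (Equiv.Perm M)) m c : ℝ)
      = (Nat.card (Equiv.Perm M) : ℝ) := by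
  have : ∀ c : Fin L → M, keyCount (⊤ : Subgroup (Equiv.Perm M)) m c
      = (Finset.univ.filter fun k : Equiv.Perm M => (fun l => k (m l)) = c).card := by
    intro c
    rw [keyCount, Nat.card_eq_fintype_card, Fintype.card_subtype]
    congr 1
    ext k
    simp [funext_iff]
  simp_rw [this]
  rw [← Nat.cast_sum, Nat.card_eq_fintype_card, ← Finset.card_univ]
  congr 1
  exact (Finset.card_eq_sum_card_fiberwise (fun _ _ => Finset.mem_coe.2 (Finset.mem_univ _))).symm

theorem keyCount_le {M : Type*} [Fintype M] {L : ℕ} (m c : Fin L → M) :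
    keyCount (⊤ : Subgroup (Equiv.Perm M)) m c ≤ Nat.card (Equiv.Perm M) :=
  Nat.card_le_card_of_injective _ Subtype.val_injective

theorem keyCount_two {M : Type*} [Fintype M] {L : ℕ} (m c : Fin L → M) (p : M × M)
    (hp : p.1 ≠ p.2) (hm : missP m p)
    (h0 : keyCount (⊤ : Subgroup (Equiv.Perm M)) m c ≠ 0) :
    2 ≤ keyCount (⊤ : Subgroup (Equiv.Perm M)) m c := by
  unfold keyCount at *
  obtain ⟨⟨k, hk⟩⟩ := (Nat.card_ne_zero.1 h0).1
  have : Nontrivial {k : Equiv.Perm M // k ∈ (⊤ : Subgroup (Equiv.Perm M)) ∧ ∀ l, k (m l) = c l} := by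
    refine ⟨⟨k, hk⟩, ⟨k * Equiv.swap p.1 p.2, trivial, fun l => ?_⟩, fun h => ?_⟩
    · rw [Equiv.Perm.mul_apply, Equiv.swap_apply_of_ne_of_ne (hm l).1 (hm l).2, hk.2]
    · have h2 := congrArg (fun f => f.1 p.1) h
      simp at h2
      exact hp h2
  exact Finite.one_lt_card

theorem keyCount_one {M : Type*} [Fintype M] {L : ℕ} (m c : Fin L → M)
    (hm : ∀ p : M × M, p.1 ≠ p.2 → ¬ missP m p) :
    keyCount (⊤ : Subgroup (Equiv.Perm M)) m c ≤ 1 := by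
  unfold keyCount
  rw [Finite.card_le_one_iff_subsingleton]
  refine ⟨fun ⟨a, ha⟩ ⟨b, hb⟩ => ?_⟩
  have key : ∀ l, a (m l) = b (m l) := fun l => (ha.2 l).trans (hb.2 l).symm
  simp only [Subtype.mk.injEq]
  ext x
  by_contra hx
  have hx1 : ∀ l, m l ≠ x := fun l h => hx (h ▸ key l)
  have hy : b.symm (a x) ≠ x := fun h => hx (by
    have := congrArg b h
    simpa using this)
  refine hm (x, b.symm (a x)) hy.symm fun l => ⟨hx1 l, fun h => ?_⟩
  have h3 : b (m l) = a x := by rw [h]; simp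
  rw [← key l] at h3
  exact hx1 l (a.injective h3)

theorem kae_bounds_core {M : Type*} [Fintype M]
    (hN : 2 ≤ Fintype.card M) (P : M → ℝ)
    (hP : ∀ x, 0 ≤ P x) (hsum : ∑ x, P x = 1)
    (c : ℝ) (hc : IsLeast {y : ℝ | ∃ i j : M, i ≠ j ∧ P i + P j = y} c) (L : ℕ) :
    Real.log 2 * (1 - c) ^ L ≤ kae (⊤ : Subgroup (Equiv.Perm M)) P L ∧
      kae (⊤ : Subgroup (Equiv.Perm M)) P L ≤
        Real.log (Nat.factorial (Fintype.card M)) *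
          (Fintype.card M * (Fintype.card M - 1) / 2) * (1 - c) ^ L := by
  have hcard : (Nat.card (⊤ : Subgroup (Equiv.Perm M)) : ℝ) = (Nat.card (Equiv.Perm M) : ℝ) := by
    rw [Subgroup.card_top]
  have hfac : Nat.card (Equiv.Perm M) = (Fintype.card M).factorial := by
    rw [Nat.card_perm, Nat.card_eq_fintype_card]
  have hpos : (0 : ℝ) < (Nat.card (Equiv.Perm M) : ℝ) := by
    rw [hfac]; exact_mod_cast Nat.factorial_pos _
  unfold kae
  rw [hcard]
  set F : ℝ := (Nat.card (Equiv.Perm M) : ℝ) with hF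
  have hlogn : ∀ m c : Fin L → M,
      0 ≤ Real.log (keyCount (⊤ : Subgroup (Equiv.Perm M)) m c) := fun m c =>
    Real.log_natCast_nonneg _
  have hw := fun m : Fin L → M => wordP_nonneg P hP m
  have hterm : ∀ m c : Fin L → M, 0 ≤ wordP P m *
      (keyCount (⊤ : Subgroup (Equiv.Perm M)) m c : ℝ) / F := fun m c => by
    have := hw m
    positivity
  have hs : ∀ (m : Fin L → M) (t : ℝ), ∑ c : Fin L → M, wordP P m *
      (keyCount (⊤ : Subgroup (Equiv.Perm M)) m c : ℝ) / F * t = wordP P m * t := by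
    intro m t
    rw [← Finset.sum_mul, ← Finset.sum_div, ← Finset.mul_sum, sum_keyCount]
    rw [mul_div_assoc, div_self hpos.ne', mul_one]
  constructor
  · obtain ⟨i, j, hij, hc1⟩ := hc.1
    rw [← hc1, ← sum_miss P hsum (i, j) hij L, Finset.mul_sum]
    refine Finset.sum_le_sum fun m _ => ?_
    by_cases h : missP m (i, j)
    · rw [if_pos h, mul_comm, ← hs m]
      refine Finset.sum_le_sum fun c _ => ?_
      by_cases h0 : keyCount (⊤ : Subgroup (Equiv.Perm M)) m c = 0
      · simp [h0]
      · refine mul_le_mul_of_nonneg_left ?_ (hterm m c)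
        refine Real.log_le_log (by norm_num) ?_
        exact_mod_cast keyCount_two m c (i, j) hij h h0
    · rw [if_neg h, mul_zero]
      exact Finset.sum_nonneg fun c _ => mul_nonneg (hterm m c) (hlogn m c)
  · have hlF : 0 ≤ Real.log F := Real.log_natCast_nonneg _
    rw [← hfac, ← hF]
    have h1 : ∀ m : Fin L → M, ∑ c : Fin L → M, wordP P m *
        (keyCount (⊤ : Subgroup (Equiv.Perm M)) m c : ℝ) / F *
          Real.log (keyCount (⊤ : Subgroup (Equiv.Perm M)) m c) ≤
        Real.log F / 2 * ∑ p ∈ (Finset.univ : Finset M).offDiag,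
          (if missP m p then wordP P m else 0) := by
      intro m
      have hnn : ∀ p : M × M, 0 ≤ (if missP m p then wordP P m else 0) := fun p => by
        split_ifs
        · exact hw m
        · exact le_rfl
      by_cases h : ∃ p : M × M, p.1 ≠ p.2 ∧ missP m p
      · obtain ⟨⟨i, j⟩, hij, hp⟩ := h
        have hij' : i ≠ j := hij
        have hp' : missP m (j, i) := fun l => (hp l).symm
        have h2 : 2 * wordP P m ≤ ∑ p ∈ (Finset.univ : Finset M).offDiag,
            (if missP m p then wordP P m else 0) := by
          have hsub : ({(i, j), (j, i)} : Finset (M × M)) ⊆ (Finset.univ : Finset M).offDiag := by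
            intro p hp
            simp only [Finset.mem_insert, Finset.mem_singleton] at hp
            rcases hp with rfl | rfl
            · simpa using hij'
            · simpa using hij'.symm
          refine le_trans ?_ (Finset.sum_le_sum_of_subset_of_nonneg hsub fun p _ _ => hnn p)
          rw [Finset.sum_pair (by simp [hij']), if_pos hp, if_pos hp']
          linarith
        calc _ ≤ ∑ c : Fin L → M, wordP P m *
              (keyCount (⊤ : Subgroup (Equiv.Perm M)) m c : ℝ) / F * Real.log F := by
              refine Finset.sum_le_sum fun c _ => ?_
              by_cases h0 : keyCount (⊤ : Subgroup (Equiv.Perm M)) m c = 0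
              · simp [h0]
              · refine mul_le_mul_of_nonneg_left ?_ (hterm m c)
                refine Real.log_le_log (by exact_mod_cast Nat.pos_of_ne_zero h0) ?_
                exact Nat.cast_le.2 (keyCount_le m c)
          _ = wordP P m * Real.log F := hs m _
          _ = Real.log F / 2 * (2 * wordP P m) := by ring
          _ ≤ _ := mul_le_mul_of_nonneg_left h2 (by positivity)
      · push Not at h
        refine le_trans (le_of_eq ?_) (mul_nonneg (by positivity) (Finset.sum_nonneg fun p _ => hnn p))
        refine Finset.sum_eq_zero fun c _ => ?_
        have := keyCount_one m c h
        interval_cases keyCount (⊤ : Subgroup (Equiv.Perm M)) m c <;> simp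
    refine (Finset.sum_le_sum fun m _ => h1 m).trans ?_
    rw [← Finset.mul_sum, Finset.sum_comm]
    have h3 : ∑ p ∈ (Finset.univ : Finset M).offDiag, ∑ m : Fin L → M,
        (if missP m p then wordP P m else 0) ≤
        ∑ p ∈ (Finset.univ : Finset M).offDiag, (1 - c) ^ L := by
      refine Finset.sum_le_sum fun p hp => ?_
      have hp : p.1 ≠ p.2 := by simpa using hp
      rw [sum_miss P hsum p hp]
      have hle : P p.1 + P p.2 ≤ 1 := by
        rw [← hsum, ← Finset.sum_pair hp]
        exact Finset.sum_le_sum_of_subset_of_nonneg (Finset.subset_univ _) fun x _ _ => hP x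
      have hcl : c ≤ P p.1 + P p.2 := hc.2 ⟨_, _, hp, rfl⟩
      exact pow_le_pow_left₀ (by linarith) (by linarith) L
    refine (mul_le_mul_of_nonneg_left h3 (by positivity)).trans (le_of_eq ?_)
    rw [Finset.sum_const, Finset.offDiag_card, Finset.card_univ, nsmul_eq_mul,
      Nat.cast_sub (Nat.le_mul_self _)]
    push_cast
    ring

/-- Simple substitution cipher:
`log 2 · R₁^L ≤ H(K | M^L C^L) ≤ log(N!) · (N(N-1)/2) · R₁^L` with
`R₁ = 1 - min_{i ≠ j}(P i + P j)`. -/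
theorem kae_bounds_simple_substitution {M : Type*} [Fintype M] [DecidableEq M]
    (hN : 2 ≤ Fintype.card M) (P : M → ℝ)
    (hP : ∀ x, 0 ≤ P x) (hsum : ∑ x, P x = 1)
    (c : ℝ) (hc : IsLeast {y : ℝ | ∃ i j : M, i ≠ j ∧ P i + P j = y} c) (L : ℕ) :
    Real.log 2 * (1 - c) ^ L ≤ kae (⊤ : Subgroup (Equiv.Perm M)) P L ∧
      kae (⊤ : Subgroup (Equiv.Perm M)) P L ≤
        Real.log (Nat.factorial (Fintype.card M)) *
          (Fintype.card M * (Fintype.card M - 1) / 2) * (1 - c) ^ L := by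
  exact kae_bounds_core hN P hP hsum c hc L
end
end
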